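/- For every integer d ≥ 4, the enumerative invariants of Section 5 satisfy the degeneration relation N₂(d) = 4·e(d, 2d−5) + (6d−16)·b(d−1, 2d−5) + 38·a(d, 2d−5) + (11 + 9·(6d−15))·a(d−1, 2d−5) + N₃(d). -/

import Mathlib

/-- The factorial of an integer `n`, interpreted as `0! = 1` extended by `n! = (n.toNat)!`
(only ever applied to nonnegative integers). -/
noncomputable def zfact (n : ℤ) : ℚ := (Nat.factorial n.toNat : ℚ)

/-- `1/n!` for an integer `n`, with the convention `1/n! = 0` whenever `n < 0`. -/
noncomputable def invfact (n : ℤ) : ℚ :=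
  if 0 ≤ n then (Nat.factorial n.toNat : ℚ)⁻¹ else 0

/-- The binomial coefficient `binom(n, k)` for integers, equal to `0` when `k > n` or `k < 0`. -/
noncomputable def zbinom (n k : ℤ) : ℚ :=
  if 0 ≤ k ∧ k ≤ n then (Nat.choose n.toNat k.toNat : ℚ) else 0

/-- `a(d, g) = (2d−g−1)·g!/(d!·(g−d+1)!)` from Proposition 2.1. -/
noncomputable def aCount (d g : ℤ) : ℚ :=
  ((2 * d - g - 1 : ℤ) : ℚ) * zfact g * invfact d * invfact (g - d + 1)

/-- `b(d, g) = (2d−g−1)·(2d−g)·(2d−g+1)·g!/(d!·(g−d)!)` from Proposition 2.1. -/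
noncomputable def bCount (d g : ℤ) : ℚ :=
  ((2 * d - g - 1 : ℤ) : ℚ) * ((2 * d - g : ℤ) : ℚ) * ((2 * d - g + 1 : ℤ) : ℚ) *
    zfact g * invfact d * invfact (g - d)

/-- `c(d, g, γ) = (γ²·(2d−g) − γ)·binom(g, d)` from Proposition 2.1. -/
noncomputable def cCount (d g γ : ℤ) : ℚ :=
  (((γ : ℚ) ^ 2 * ((2 * d - g : ℤ) : ℚ) - (γ : ℚ))) * zbinom g d

/-- `e(d, g) = 8·g!/((d−3)!·(g−d+2)!) − 8·g!/(d!·(g−d−1)!)` from Proposition 2.1. -/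
noncomputable def eCount (d g : ℤ) : ℚ :=
  8 * zfact g * invfact (d - 3) * invfact (g - d + 2) -
    8 * zfact g * invfact d * invfact (g - d - 1)

/-- `N(d)`, the number of pencils of degree `d` with two unspecified triple ramification
points on a general curve of genus `2d−4` (Proposition 2.2 (2)). -/
noncomputable def Ncount (d : ℤ) : ℚ :=
  48 * (6 * (d : ℚ) ^ 2 - 28 * (d : ℚ) + 35) * zfact (2 * d - 4) * invfact d * invfact (d - 3)

/-- `N₁(d)` from Proposition 2.2 (3). -/
noncomputable def N1count (d : ℤ) : ℚ :=
  24 * (12 * (d : ℚ) ^ 3 - 92 * (d : ℚ) ^ 2 + 240 * (d : ℚ) - 215) *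
    zfact (2 * d - 4) * invfact d * invfact (d - 2)

/-- `N₂(d)` from Theorem 5.4. -/
noncomputable def N2count (d : ℤ) : ℚ :=
  6 * (40 * (d : ℚ) ^ 2 - 179 * (d : ℚ) + 212) * zfact (2 * d - 4) * invfact d * invfact (d - 3)

/-- `N₃(d)` from Theorem 5.6. -/
noncomputable def N3count (d : ℤ) : ℚ :=
  84 * ((d : ℚ) - 3) * (2 * (d : ℚ) ^ 2 - 10 * (d : ℚ) + 13) *
    zfact (2 * d - 4) * invfact d * invfact (d - 2)

/-- The overall constant `K(d) = 2·(2d−6)!/(d!·(d−3)!)` of Theorem 1. -/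
noncomputable def Kconst (d : ℤ) : ℚ := 2 * zfact (2 * d - 6) * invfact d * invfact (d - 3)

/-- The `λ`-coefficient `A(d) = K(d)·24·(36d⁴−36d³−640d²+1885d−1475)` of Theorem 1. -/
noncomputable def Acoeff (d : ℤ) : ℚ :=
  Kconst d * (24 * (36 * (d : ℚ) ^ 4 - 36 * (d : ℚ) ^ 3 - 640 * (d : ℚ) ^ 2 +
    1885 * (d : ℚ) - 1475))

/-- The `δ₀`-coefficient `B₀(d) = K(d)·(144d⁴−528d³−298d²+3049d−2940)` of Theorem 1. -/
noncomputable def B0coeff (d : ℤ) : ℚ :=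
  Kconst d * (144 * (d : ℚ) ^ 4 - 528 * (d : ℚ) ^ 3 - 298 * (d : ℚ) ^ 2 +
    3049 * (d : ℚ) - 2940)

/-- The `δᵢ`-coefficient `Bᵢ(d) = K(d)·12·i·(2d−3−i)·(36d³−156d²+180d−5)`, `i ≥ 1`,
of Theorem 1. -/
noncomputable def Bcoeff (d i : ℤ) : ℚ :=
  Kconst d * (12 * (i : ℚ) * (2 * (d : ℚ) - 3 - (i : ℚ)) *
    (36 * (d : ℚ) ^ 3 - 156 * (d : ℚ) ^ 2 + 180 * (d : ℚ) - 5))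

theorem invfact_pred (n : ℤ) : invfact (n - 1) = (n : ℚ) * invfact n := by
  unfold invfact
  rcases lt_trichotomy n 0 with h | h | h
  · rw [if_neg (by omega), if_neg (by omega), mul_zero]
  · subst h; simp
  · obtain ⟨m, rfl⟩ : ∃ m : ℕ, n = (m : ℤ) + 1 := ⟨(n - 1).toNat, by omega⟩
    rw [if_pos (by omega), if_pos (by omega)]
    have h1 : ((m : ℤ) + 1 - 1).toNat = m := by omega
    have h2 : ((m : ℤ) + 1).toNat = m + 1 := by omega
    rw [h1, h2, Nat.factorial_succ]
    have : (Nat.factorial m : ℚ) ≠ 0 := by positivity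
    have : (m : ℚ) + 1 ≠ 0 := by positivity
    push_cast
    field_simp

theorem zfact_step (n : ℤ) (h : 0 < n) : zfact n = (n : ℚ) * zfact (n - 1) := by
  unfold zfact
  obtain ⟨m, rfl⟩ : ∃ m : ℕ, n = (m : ℤ) + 1 := ⟨(n - 1).toNat, by omega⟩
  have h1 : ((m : ℤ) + 1 - 1).toNat = m := by omega
  have h2 : ((m : ℤ) + 1).toNat = m + 1 := by omega
  rw [h1, h2, Nat.factorial_succ]
  push_cast
  ring

/-- the degeneration relation for `N₂(d)` of Section 5, for every integer `d ≥ 4`: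
`N₂(d) = 4·e(d, 2d−5) + (6d−16)·b(d−1, 2d−5) + 38·a(d, 2d−5) + (11 + 9·(6d−15))·a(d−1, 2d−5)
 + N₃(d)`. -/
theorem N2_degeneration_relation (d : ℤ) (hd : 4 ≤ d) :
    N2count d = 4 * eCount d (2 * d - 5) + (6 * (d : ℚ) - 16) * bCount (d - 1) (2 * d - 5) +
      38 * aCount d (2 * d - 5) + (11 + 9 * (6 * (d : ℚ) - 15)) * aCount (d - 1) (2 * d - 5) +
      N3count d := by
  have z := zfact_step (2 * d - 4) (by omega)
  have e1 := invfact_pred d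
  have e3 := invfact_pred (d - 2)
  have e4 := invfact_pred (d - 3)
  have e5 := invfact_pred (d - 4)
  have e6 := invfact_pred (d - 5)
  have e2 := invfact_pred (d - 1)
  rw [show (2 * d - 4 - 1 : ℤ) = 2 * d - 5 by ring] at z
  rw [show (d - 1 - 1 : ℤ) = d - 2 by ring] at e2
  rw [show (d - 2 - 1 : ℤ) = d - 3 by ring] at e3
  rw [show (d - 3 - 1 : ℤ) = d - 4 by ring] at e4
  rw [show (d - 4 - 1 : ℤ) = d - 5 by ring] at e5
  rw [show (d - 5 - 1 : ℤ) = d - 6 by ring] at e6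
  unfold N2count eCount bCount aCount N3count
  rw [show (2 * d - 5 - d + 2 : ℤ) = d - 3 by ring, show (2 * d - 5 - d - 1 : ℤ) = d - 6 by ring,
    show (2 * d - 5 - (d - 1) : ℤ) = d - 4 by ring, show (2 * d - 5 - d + 1 : ℤ) = d - 4 by ring,
    show (d - 4 + 1 : ℤ) = d - 3 by ring, z, e6, e5, e4, e3, e2, e1]
  push_cast
  ring
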